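/- arXiv:1607.00923 — 3 statements merged into one kernel-verified Lean document; each statement's English description precedes it below -/
import Mathlib

section
/- Let u, v, p : ℝ³ → ℝ be functions of (t,x,y), with u twice continuously differentiable and v, p continuously differentiable, and assume p is C² so that ∂_y∂_x p exists. Assume that at every point: (incompressibility) ∂_x u + ∂_y v = 0; (momentum balance) ∂_t u + u ∂_x u + v ∂_y u = −∂_x p; and (hydrostatic pressure gradient) ∂_y(∂_x p) = 0. Then the vertical shear w := ∂_y u satisfies the transport equation ∂_t w + u ∂_x w + v ∂_y w = 0 at every point. -/
/-- Partial derivative in the first coordinate (time) of a function on ℝ³. -/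
noncomputable def pt3 (f : ℝ × ℝ × ℝ → ℝ) (q : ℝ × ℝ × ℝ) : ℝ :=
  deriv (fun s => f (s, q.2.1, q.2.2)) q.1

/-- Partial derivative in the second coordinate (horizontal) of a function on ℝ³. -/
noncomputable def px3 (f : ℝ × ℝ × ℝ → ℝ) (q : ℝ × ℝ × ℝ) : ℝ :=
  deriv (fun s => f (q.1, s, q.2.2)) q.2.1

/-- Partial derivative in the third coordinate (vertical) of a function on ℝ³. -/
noncomputable def py3 (f : ℝ × ℝ × ℝ → ℝ) (q : ℝ × ℝ × ℝ) : ℝ :=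
  deriv (fun s => f (q.1, q.2.1, s)) q.2.2

/-!
With the space-time velocity field `X = (1, u, v)`, momentum balance says that the derivative of
`u` along `X` is the negative pressure gradient, which does not depend on `y`. Differentiating in
`y` and using the symmetry of the second derivative of `u`, the derivative of `∂_y u` along `X`
equals minus the derivative of `u` along `∂_y X = (0, ∂_y u, ∂_y v)`. The latter derivative is
`∂_y u * (∂_x u + ∂_y v)`, which vanishes by incompressibility.
-/

section DirectionalDerivative

variable {𝕜 E F : Type*} [NontriviallyNormedField 𝕜]
  [NormedAddCommGroup E] [NormedSpace 𝕜 E] [NormedAddCommGroup F] [NormedSpace 𝕜 F]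

theorem fderiv_fderiv_apply_vectorField {f : E → F} {X : E → E} {q : E}
    (hf : DifferentiableAt 𝕜 (fderiv 𝕜 f) q) (hsymm : IsSymmSndFDerivAt 𝕜 f q)
    (hX : DifferentiableAt 𝕜 X q) (e : E) :
    fderiv 𝕜 (fun z => fderiv 𝕜 f z (X z)) q e =
      fderiv 𝕜 (fun z => fderiv 𝕜 f z e) q (X q) + fderiv 𝕜 f q (fderiv 𝕜 X q e) := by
  have hleft : fderiv 𝕜 (fun z => fderiv 𝕜 f z (X z)) q e =
      fderiv 𝕜 f q (fderiv 𝕜 X q e) + fderiv 𝕜 (fderiv 𝕜 f) q e (X q) := by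
    simp [fderiv_clm_apply hf hX]
  have hright : fderiv 𝕜 (fun z => fderiv 𝕜 f z e) q (X q) =
      fderiv 𝕜 (fderiv 𝕜 f) q (X q) e := by
    simp [fderiv_clm_apply hf (differentiableAt_const e)]
  rw [hleft, hright, hsymm.eq e (X q), add_comm]

end DirectionalDerivative

section PartialDerivatives

variable {f : ℝ × ℝ × ℝ → ℝ} {q : ℝ × ℝ × ℝ}

theorem pt3_eq_fderiv (hf : DifferentiableAt ℝ f q) : pt3 f q = fderiv ℝ f q (1, 0, 0) :=
  (hf.hasFDerivAt.comp_hasDerivAt q.1 ((hasDerivAt_id q.1).prodMk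
    ((hasDerivAt_const q.1 q.2.1).prodMk (hasDerivAt_const q.1 q.2.2)))).deriv

theorem px3_eq_fderiv (hf : DifferentiableAt ℝ f q) : px3 f q = fderiv ℝ f q (0, 1, 0) :=
  (hf.hasFDerivAt.comp_hasDerivAt q.2.1 ((hasDerivAt_const q.2.1 q.1).prodMk
    ((hasDerivAt_id q.2.1).prodMk (hasDerivAt_const q.2.1 q.2.2)))).deriv

theorem py3_eq_fderiv (hf : DifferentiableAt ℝ f q) : py3 f q = fderiv ℝ f q (0, 0, 1) :=
  (hf.hasFDerivAt.comp_hasDerivAt q.2.2 ((hasDerivAt_const q.2.2 q.1).prodMk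
    ((hasDerivAt_const q.2.2 q.2.1).prodMk (hasDerivAt_id q.2.2)))).deriv

theorem fderiv_apply_eq_partials (hf : DifferentiableAt ℝ f q) (a b c : ℝ) :
    fderiv ℝ f q (a, b, c) = a * pt3 f q + b * px3 f q + c * py3 f q := by
  have hdecomp : ((a, b, c) : ℝ × ℝ × ℝ) =
      a • (1, 0, 0) + b • (0, 1, 0) + c • (0, 0, 1) := by simp
  rw [hdecomp, pt3_eq_fderiv hf, px3_eq_fderiv hf, py3_eq_fderiv hf]
  simp only [map_add, map_smul, smul_eq_mul]

end PartialDerivatives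

/-- The material derivative `Df/Dt = ∂_t f + u ∂_x f + v ∂_y f`: the rate of change of `f` along
the planar flow with horizontal velocity `u` and vertical velocity `v`. -/
noncomputable def materialDeriv (u v f : ℝ × ℝ × ℝ → ℝ) (q : ℝ × ℝ × ℝ) : ℝ :=
  pt3 f q + u q * px3 f q + v q * py3 f q

section MaterialDerivative

variable {u v f : ℝ × ℝ × ℝ → ℝ} {q : ℝ × ℝ × ℝ}

theorem materialDeriv_eq_fderiv (hf : DifferentiableAt ℝ f q) :
    materialDeriv u v f q = fderiv ℝ f q (1, u q, v q) := by
  rw [materialDeriv, fderiv_apply_eq_partials hf, one_mul]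

theorem fderiv_velocity_apply_vertical (hu : DifferentiableAt ℝ u q)
    (hv : DifferentiableAt ℝ v q) :
    fderiv ℝ (fun z => ((1 : ℝ), u z, v z)) q (0, 0, 1) = (0, py3 u q, py3 v q) := by
  have hX := (hasFDerivAt_const (1 : ℝ) q).prodMk (hu.hasFDerivAt.prodMk hv.hasFDerivAt)
  rw [hX.fderiv, py3_eq_fderiv hu, py3_eq_fderiv hv]
  rfl

theorem py3_materialDeriv (hu : DifferentiableAt ℝ u q) (hv : DifferentiableAt ℝ v q)
    (hf : ContDiff ℝ 2 f) :
    py3 (materialDeriv u v f) q =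
      materialDeriv u v (py3 f) q + py3 u q * px3 f q + py3 v q * py3 f q := by
  have df : Differentiable ℝ f := hf.differentiable two_ne_zero
  have ddf : Differentiable ℝ (fderiv ℝ f) :=
    (hf.fderiv_right one_add_one_eq_two.le).differentiable one_ne_zero
  have dX : DifferentiableAt ℝ (fun z => ((1 : ℝ), u z, v z)) q :=
    (differentiableAt_const 1).prodMk (hu.prodMk hv)
  have hD : materialDeriv u v f = fun z => fderiv ℝ f z (1, u z, v z) :=
    funext fun z => materialDeriv_eq_fderiv (df z)
  have hfy : py3 f = fun z => fderiv ℝ f z (0, 0, 1) := funext fun z => py3_eq_fderiv (df z)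
  have dfy : Differentiable ℝ (py3 f) := hfy ▸ ddf.clm_apply (differentiable_const _)
  have hsymm : IsSymmSndFDerivAt ℝ f q := hf.contDiffAt.isSymmSndFDerivAt (by simp)
  calc
    py3 (materialDeriv u v f) q = fderiv ℝ (fun z => fderiv ℝ f z (1, u z, v z)) q (0, 0, 1) := by
      rw [hD, py3_eq_fderiv ((ddf q).clm_apply dX)]
    _ = fderiv ℝ (py3 f) q (1, u q, v q) + fderiv ℝ f q (0, py3 u q, py3 v q) := by
      rw [fderiv_fderiv_apply_vectorField (ddf q) hsymm dX, ← hfy,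
        fderiv_velocity_apply_vertical hu hv]
    _ = materialDeriv u v (py3 f) q + py3 u q * px3 f q + py3 v q * py3 f q := by
      rw [← materialDeriv_eq_fderiv (dfy q), fderiv_apply_eq_partials (df q)]
      ring

end MaterialDerivative

theorem shear_transport_general {u v g : ℝ × ℝ × ℝ → ℝ}
    (hu : ContDiff ℝ 2 u) (hv : Differentiable ℝ v)
    (hincomp : ∀ q, px3 u q + py3 v q = 0)
    (hmom : ∀ q, materialDeriv u v u q = -g q)
    (hg : ∀ q, py3 g q = 0) (q : ℝ × ℝ × ℝ) :
    materialDeriv u v (py3 u) q = 0 := by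
  have hvertical : py3 (materialDeriv u v u) q = 0 := by
    rw [funext hmom]
    simpa only [py3, deriv.fun_neg, neg_eq_zero] using hg q
  rw [py3_materialDeriv (hu.differentiable two_ne_zero q) (hv q) hu] at hvertical
  linear_combination hvertical - py3 u q * hincomp q

/-- For the hydrostatic Euler (long-wave) equations, the vertical shear
`w = ∂_y u` satisfies the transport equation `∂_t w + u ∂_x w + v ∂_y w = 0`. -/
theorem shear_transport
    (u v p : ℝ × ℝ × ℝ → ℝ)
    (hu : ContDiff ℝ 2 u) (hv : ContDiff ℝ 1 v) (hp : ContDiff ℝ 2 p)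
    (hincomp : ∀ q : ℝ × ℝ × ℝ, px3 u q + py3 v q = 0)
    (hmom : ∀ q : ℝ × ℝ × ℝ,
      pt3 u q + u q * px3 u q + v q * py3 u q = - px3 p q)
    (hpress : ∀ q : ℝ × ℝ × ℝ, py3 (px3 p) q = 0) :
    ∀ q : ℝ × ℝ × ℝ,
      pt3 (py3 u) q + u q * px3 (py3 u) q + v q * py3 (py3 u) q = 0 :=
  shear_transport_general hu (hv.differentiable one_ne_zero) hincomp hmom hpress
end

section
/- Let δ̄ ∈ ℝ and let h, U, u_e, p, δ₁, δ₂, J, τ̄_b : ℝ² → ℝ (functions of (t,x)) be differentiable. Assume at every point: (i) ideal fluid momentum ∂_t u_e + u_e ∂_x u_e = −∂_x p; (ii) mass conservation ∂_t h + ∂_x(hU) = 0; (iii) momentum conservation ∂_t(hU) + ∂_x J = −h ∂_x p − δ̄ τ̄_b; (iv) displacement-thickness relation hU = (h − δ̄ δ₁) u_e; and (v) the von Kármán equation ∂_t(u_e δ₁) + u_e δ₁ ∂_x u_e + ∂_x(u_e² δ₂) = τ̄_b. Then ∂_x(J − h U u_e + δ̄ δ₂ u_e²) = 0 at every point; in particular,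 if J vanishes wherever the velocities vanish, J = h U u_e − δ̄ δ₂ u_e² = (h − δ̄(δ₁ + δ₂)) u_e². -/
/-- Partial derivative in the first coordinate (time) of a function on ℝ². -/
noncomputable def pt2 (f : ℝ × ℝ → ℝ) (q : ℝ × ℝ) : ℝ :=
  deriv (fun s => f (s, q.2)) q.1

/-- Partial derivative in the second coordinate (space) of a function on ℝ². -/
noncomputable def px2 (f : ℝ × ℝ → ℝ) (q : ℝ × ℝ) : ℝ :=
  deriv (fun s => f (q.1, s)) q.2

/-!
Mass conservation puts the ideal-fluid momentum equation in conservative form,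
`∂ₜ(h uₑ) + ∂ₓ(hU uₑ) = -h ∂ₓp - δ̄ δ₁ uₑ ∂ₓuₑ`, where the last term comes from the mass flux
defect `h uₑ - hU = δ̄ δ₁ uₑ`. The von Kármán equation times `δ̄` is a balance law for that defect,
`∂ₜ(δ̄ δ₁ uₑ) + ∂ₓ(δ̄ δ₂ uₑ²) = δ̄ τ̄_b - δ̄ δ₁ uₑ ∂ₓuₑ`. In the difference the products
`δ₁ uₑ ∂ₓuₑ` cancel, so `hU` satisfies momentum conservation with flux `hU uₑ - δ̄ δ₂ uₑ²`. It
does so with flux `J` as well, hence the two fluxes differ by a function of time alone.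
-/

section PartialDerivatives

variable {f g : ℝ × ℝ → ℝ} {q : ℝ × ℝ}

lemma hasDerivAt_pt2 (hf : DifferentiableAt ℝ f q) :
    HasDerivAt (fun s => f (s, q.2)) (pt2 f q) q.1 :=
  (DifferentiableAt.comp q.1 (f := fun s => (s, q.2)) hf (by fun_prop)).hasDerivAt

lemma hasDerivAt_px2 (hf : DifferentiableAt ℝ f q) :
    HasDerivAt (fun s => f (q.1, s)) (px2 f q) q.2 :=
  (DifferentiableAt.comp q.2 (f := fun s => (q.1, s)) hf (by fun_prop)).hasDerivAt

lemma pt2_mul (hf : DifferentiableAt ℝ f q) (hg : DifferentiableAt ℝ g q) :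
    pt2 (fun q => f q * g q) q = pt2 f q * g q + f q * pt2 g q :=
  ((hasDerivAt_pt2 hf).mul (hasDerivAt_pt2 hg)).deriv

lemma px2_mul (hf : DifferentiableAt ℝ f q) (hg : DifferentiableAt ℝ g q) :
    px2 (fun q => f q * g q) q = px2 f q * g q + f q * px2 g q :=
  ((hasDerivAt_px2 hf).mul (hasDerivAt_px2 hg)).deriv

lemma pt2_sub_const_mul (c : ℝ) (hf : DifferentiableAt ℝ f q) (hg : DifferentiableAt ℝ g q) :
    pt2 (fun q => f q - c * g q) q = pt2 f q - c * pt2 g q :=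
  ((hasDerivAt_pt2 hf).sub ((hasDerivAt_pt2 hg).const_mul c)).deriv

lemma px2_sub_const_mul (c : ℝ) (hf : DifferentiableAt ℝ f q) (hg : DifferentiableAt ℝ g q) :
    px2 (fun q => f q - c * g q) q = px2 f q - c * px2 g q :=
  ((hasDerivAt_px2 hf).sub ((hasDerivAt_px2 hg).const_mul c)).deriv

lemma px2_sub (hf : DifferentiableAt ℝ f q) (hg : DifferentiableAt ℝ g q) :
    px2 (fun q => f q - g q) q = px2 f q - px2 g q :=
  ((hasDerivAt_px2 hf).sub (hasDerivAt_px2 hg)).deriv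

lemma eq_of_px2_eq_zero (hf : Differentiable ℝ f) {t : ℝ} (hf' : ∀ x, px2 f (t, x) = 0)
    (x y : ℝ) : f (t, x) = f (t, y) :=
  is_const_of_deriv_eq_zero (f := fun s => f (t, s)) (by fun_prop) hf' x y

end PartialDerivatives

section BalanceLaws

-- `m` stands for the mass flux `hU` and `G` for the pressure gradient `∂ₓp`.
variable {δb : ℝ} {f h m ue δ₁ δ₂ τb G : ℝ × ℝ → ℝ} {q : ℝ × ℝ}

lemma balance_mul_of_mass_conservation (hdh : DifferentiableAt ℝ h q)
    (hdm : DifferentiableAt ℝ m q) (hdf : DifferentiableAt ℝ f q)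
    (hmass : pt2 h q + px2 m q = 0) :
    pt2 (fun q => h q * f q) q + px2 (fun q => m q * f q) q = h q * pt2 f q + m q * px2 f q := by
  rw [pt2_mul hdh hdf, px2_mul hdm hdf]
  linear_combination f q * hmass

lemma ideal_momentum_balance (hdh : DifferentiableAt ℝ h q)
    (hdm : DifferentiableAt ℝ m q) (hdue : DifferentiableAt ℝ ue q)
    (hEuler : pt2 ue q + ue q * px2 ue q = -G q) (hmass : pt2 h q + px2 m q = 0) :
    pt2 (fun q => h q * ue q) q + px2 (fun q => m q * ue q) q
      = -h q * G q - (h q * ue q - m q) * px2 ue q := by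
  rw [balance_mul_of_mass_conservation hdh hdm hdue hmass]
  linear_combination h q * hEuler

lemma mass_flux_balance_of_vonKarman (hdh : DifferentiableAt ℝ h q)
    (hdue : DifferentiableAt ℝ ue q) (hdδ₁ : DifferentiableAt ℝ δ₁ q)
    (hdδ₂ : DifferentiableAt ℝ δ₂ q)
    (hEuler : pt2 ue q + ue q * px2 ue q = -G q) (hmass : pt2 h q + px2 m q = 0)
    (hdisp : ∀ q, m q = (h q - δb * δ₁ q) * ue q)
    (hVK : pt2 (fun q => ue q * δ₁ q) q + ue q * δ₁ q * px2 ue q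
      + px2 (fun q => ue q ^ 2 * δ₂ q) q = τb q) :
    pt2 m q + px2 (fun q => m q * ue q - δb * (ue q ^ 2 * δ₂ q)) q = -h q * G q - δb * τb q := by
  have hm : m = fun q => h q * ue q - δb * (ue q * δ₁ q) := by
    funext q
    rw [hdisp]
    ring
  have hdm : DifferentiableAt ℝ m q := by
    rw [hm]
    fun_prop
  have hpt : pt2 m q = pt2 (fun q => h q * ue q) q - δb * pt2 (fun q => ue q * δ₁ q) q := by
    rw [hm]
    exact pt2_sub_const_mul δb (by fun_prop) (by fun_prop)
  have hpx : px2 (fun q => m q * ue q - δb * (ue q ^ 2 * δ₂ q)) q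
      = px2 (fun q => m q * ue q) q - δb * px2 (fun q => ue q ^ 2 * δ₂ q) q :=
    px2_sub_const_mul δb (by fun_prop) (by fun_prop)
  rw [hpt, hpx]
  linear_combination ideal_momentum_balance hdh hdm hdue hEuler hmass - δb * hVK
    + px2 ue q * hdisp q

end BalanceLaws

theorem momentum_flux_closure_general
    (δb : ℝ) (h m ue δ₁ δ₂ J τb G : ℝ × ℝ → ℝ)
    (hdh : Differentiable ℝ h) (hdue : Differentiable ℝ ue)
    (hdδ₁ : Differentiable ℝ δ₁) (hdδ₂ : Differentiable ℝ δ₂) (hdJ : Differentiable ℝ J)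
    (hEuler : ∀ q, pt2 ue q + ue q * px2 ue q = -G q)
    (hmass : ∀ q, pt2 h q + px2 m q = 0)
    (hmom : ∀ q, pt2 m q + px2 J q = -h q * G q - δb * τb q)
    (hdisp : ∀ q, m q = (h q - δb * δ₁ q) * ue q)
    (hVK : ∀ q, pt2 (fun q => ue q * δ₁ q) q + ue q * δ₁ q * px2 ue q
      + px2 (fun q => ue q ^ 2 * δ₂ q) q = τb q) :
    (∀ q, px2 (fun q => J q - m q * ue q + δb * δ₂ q * ue q ^ 2) q = 0) ∧
    (∀ t, (∃ x, J (t, x) = m (t, x) * ue (t, x) - δb * δ₂ (t, x) * ue (t, x) ^ 2) →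
      ∀ x,
        J (t, x) = m (t, x) * ue (t, x) - δb * δ₂ (t, x) * ue (t, x) ^ 2 ∧
        J (t, x) = (h (t, x) - δb * (δ₁ (t, x) + δ₂ (t, x))) * ue (t, x) ^ 2) := by
  have hdm : Differentiable ℝ m := by
    rw [funext hdisp]
    fun_prop
  have hpx : ∀ q, px2 (fun q => J q - m q * ue q + δb * δ₂ q * ue q ^ 2) q = 0 := fun q => by
    have hflux := mass_flux_balance_of_vonKarman (hdh q) (hdue q) (hdδ₁ q) (hdδ₂ q) (hEuler q)
      (hmass q) hdisp (hVK q)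
    calc px2 (fun q => J q - m q * ue q + δb * δ₂ q * ue q ^ 2) q
        = px2 (fun q => J q - (m q * ue q - δb * (ue q ^ 2 * δ₂ q))) q :=
          congrArg (px2 · q) (funext fun q => by ring)
      _ = px2 J q - px2 (fun q => m q * ue q - δb * (ue q ^ 2 * δ₂ q)) q :=
          px2_sub (hdJ q) (by fun_prop)
      _ = 0 := by linear_combination hmom q - hflux
  refine ⟨hpx, fun t ⟨x₀, hx₀⟩ x => ?_⟩
  have hconst := eq_of_px2_eq_zero (by fun_prop) (fun y => hpx (t, y)) x x₀
  have hJ : J (t, x) = m (t, x) * ue (t, x) - δb * δ₂ (t, x) * ue (t, x) ^ 2 := by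
    linear_combination hconst + hx₀
  exact ⟨hJ, by linear_combination hJ + ue (t, x) * hdisp (t, x)⟩

/-- If the shallow water equations, the ideal-fluid momentum equation, the
displacement-thickness relation and the von Kármán equation hold, then the
momentum flux satisfies `∂_x(J − hUu_e + δ̄δ₂u_e²) = 0`; in particular, if `J`
vanishes wherever the velocities vanish, `J = hUu_e − δ̄δ₂u_e²
= (h − δ̄(δ₁+δ₂))u_e²`. -/
theorem momentum_flux_closure
    (δb : ℝ) (h U ue p δ₁ δ₂ J τb : ℝ × ℝ → ℝ)
    (hdh : Differentiable ℝ h) (hdU : Differentiable ℝ U)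
    (hdue : Differentiable ℝ ue) (hdp : Differentiable ℝ p)
    (hdδ₁ : Differentiable ℝ δ₁) (hdδ₂ : Differentiable ℝ δ₂)
    (hdJ : Differentiable ℝ J) (hdτ : Differentiable ℝ τb)
    -- (i) ideal fluid momentum
    (hEuler : ∀ q : ℝ × ℝ, pt2 ue q + ue q * px2 ue q = - px2 p q)
    -- (ii) mass conservation
    (hmass : ∀ q : ℝ × ℝ, pt2 h q + px2 (fun q => h q * U q) q = 0)
    -- (iii) momentum conservation
    (hmom : ∀ q : ℝ × ℝ,
      pt2 (fun q => h q * U q) q + px2 J q = - h q * px2 p q - δb * τb q)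
    -- (iv) displacement-thickness relation
    (hdisp : ∀ q : ℝ × ℝ, h q * U q = (h q - δb * δ₁ q) * ue q)
    -- (v) von Kármán equation
    (hVK : ∀ q : ℝ × ℝ,
      pt2 (fun q => ue q * δ₁ q) q + ue q * δ₁ q * px2 ue q
        + px2 (fun q => (ue q) ^ 2 * δ₂ q) q = τb q) :
    (∀ q : ℝ × ℝ,
      px2 (fun q => J q - h q * U q * ue q + δb * δ₂ q * (ue q) ^ 2) q = 0) ∧
    (∀ t : ℝ, (∃ x : ℝ, U (t, x) = 0 ∧ ue (t, x) = 0 ∧ J (t, x) = 0) →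
      ∀ x : ℝ,
        J (t, x) = h (t, x) * U (t, x) * ue (t, x) - δb * δ₂ (t, x) * (ue (t, x)) ^ 2 ∧
        J (t, x) = (h (t, x) - δb * (δ₁ (t, x) + δ₂ (t, x))) * (ue (t, x)) ^ 2) := by
  obtain ⟨hpx, hJ⟩ := momentum_flux_closure_general δb h (fun q => h q * U q) ue δ₁ δ₂ J τb (px2 p)
    hdh hdue hdδ₁ hdδ₂ hdJ hEuler hmass hmom hdisp hVK
  exact ⟨hpx, fun t ⟨x₀, _, hue, hJ₀⟩ => hJ t ⟨x₀, by simp [hue, hJ₀]⟩⟩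
end

section
/- Let u_e, b ∈ ℝ, h > 0 and Fr > 0, and define the cubic polynomial P_SW(λ) := (b − u_e − λ)((u_e − λ)² − h/Fr²) (which has leading coefficient −1 in λ). Then the derivative P_SW′ has exactly two distinct real roots λ₋ < λ₊, and for every real number d with P_SW(λ₋) < d < P_SW(λ₊), the equation P_SW(λ) = d has exactly three real solutions, all distinct. Consequently, under the condition P_SW(λ₋) < δ̄a/Fr² < P_SW(λ₊), the convective matrix of the extended shallow water system has three distinct real eigenvalues, i.e. the system is strictly hyperbolic. -/
/-- The convective matrix of the Interactive Boundary Layer formulation of the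
extended shallow water model in the variables `(h, u_e, δ₁u_e)`. -/
noncomputable def convMatrix (ue h a b δb Fr : ℝ) : Matrix (Fin 3) (Fin 3) ℝ :=
  Matrix.of ![![ue, h, -δb], ![(Fr ^ 2)⁻¹, ue, 0], ![0, a, b - ue]]

/-!
By Rolle's theorem a continuous function with no critical points other than `p < q` is injective on
each of the three intervals they cut out. If moreover it tends to `+∞` at `-∞` and to `-∞` at `+∞`,
the intermediate value theorem gives every level strictly between `f p` and `f q` exactly one
preimage in each interval.
The cubic `P_SW` is such a function: the discriminant of its derivative is a positive multiple of
`(2u_e - b)² + 3h/Fr²`. Up to sign, the characteristic polynomial of the convective matrix is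
`P_SW - δ̄a/Fr²`, so its eigenvalues solve such a level equation.
-/

open Set Filter

theorem injOn_of_deriv_ne_zero {f : ℝ → ℝ} {s : Set ℝ} (hs : s.OrdConnected)
    (hf : ContinuousOn f s) (hf' : ∀ x ∈ interior s, deriv f x ≠ 0) : InjOn f s := by
  refine injOn_iff_injective.2 (.of_lt_imp_ne fun x y hxy hfxy => ?_)
  have hsub : Icc (x : ℝ) y ⊆ s := hs.out x.2 y.2
  obtain ⟨c, hc, hc'⟩ := exists_deriv_eq_zero hxy (hf.mono hsub) hfxy
  exact hf' c (interior_maximal (Ioo_subset_Icc_self.trans hsub) isOpen_Ioo hc) hc'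

theorem exists_three_preimages_of_injOn {α β : Type*}
    [ConditionallyCompleteLinearOrder α] [DenselyOrdered α] [TopologicalSpace α] [OrderTopology α]
    [LinearOrder β] [TopologicalSpace β] [OrderClosedTopology β]
    {f : α → β} {p q : α} {d : β} (hpq : p ≤ q) (hf : Continuous f)
    (hbot : Tendsto f atBot atTop) (htop : Tendsto f atTop atBot)
    (hleft : InjOn f (Iic p)) (hmid : InjOn f (Icc p q)) (hright : InjOn f (Ici q))
    (hd : d ∈ Ioo (f p) (f q)) :
    ∃ x y z : α, x < y ∧ y < z ∧ ∀ t, f t = d ↔ t = x ∨ t = y ∨ t = z := by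
  obtain ⟨x, hxp, hx⟩ : d ∈ f '' Iic p :=
    isPreconnected_Iic.intermediate_value_Ioi (l₁ := pure p) (l₂ := atBot)
      (by simp) (le_principal_iff.2 (Iic_mem_atBot p)) hf.continuousOn
      (tendsto_pure_nhds f p) hbot hd.1
  obtain ⟨y, hy_mem, hy⟩ : d ∈ f '' Ioo p q :=
    intermediate_value_Ioo hpq hf.continuousOn hd
  obtain ⟨z, hqz, hz⟩ : d ∈ f '' Ici q :=
    isPreconnected_Ici.intermediate_value_Iio (l₁ := atTop) (l₂ := pure q)
      (le_principal_iff.2 (Ici_mem_atTop q)) (by simp) hf.continuousOn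
      htop (tendsto_pure_nhds f q) hd.2
  refine ⟨x, y, z, hxp.trans_lt hy_mem.1, hy_mem.2.trans_le hqz, fun t => ⟨fun ht => ?_, ?_⟩⟩
  · rcases le_total t p with htp | hpt
    · exact .inl (hleft htp hxp (ht.trans hx.symm))
    rcases le_total t q with htq | hqt
    · exact .inr (.inl (hmid ⟨hpt, htq⟩ (Ioo_subset_Icc_self hy_mem) (ht.trans hy.symm)))
    · exact .inr (.inr (hright hqt hqz (ht.trans hz.symm)))
  · rintro (rfl | rfl | rfl) <;> assumption

theorem exists_three_preimages_of_deriv_eq_zero {f : ℝ → ℝ} {p q d : ℝ} (hpq : p ≤ q)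
    (hf : Continuous f) (hbot : Tendsto f atBot atTop) (htop : Tendsto f atTop atBot)
    (hcrit : ∀ x, deriv f x = 0 → x = p ∨ x = q) (hd : d ∈ Ioo (f p) (f q)) :
    ∃ x y z : ℝ, x < y ∧ y < z ∧ ∀ t, f t = d ↔ t = x ∨ t = y ∨ t = z := by
  have injOn_of_avoids {s : Set ℝ} (hs : s.OrdConnected) (hp : p ∉ interior s)
      (hq : q ∉ interior s) : InjOn f s :=
    injOn_of_deriv_ne_zero hs hf.continuousOn fun x hx hx' =>
      (hcrit x hx').elim (fun hxp => hp (hxp ▸ hx)) (fun hxq => hq (hxq ▸ hx))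
  exact exists_three_preimages_of_injOn hpq hf hbot htop
    (injOn_of_avoids ordConnected_Iic (by simp) (by simpa using hpq))
    (injOn_of_avoids ordConnected_Icc (by simp) (by simp))
    (injOn_of_avoids ordConnected_Ici (by simpa using hpq) (by simp)) hd

/-- The cubic `P_SW` whose roots are, for `0 ≤ k`, the uncoupled wave speeds `v` and `u ± √k`; in
the notation of the paper `u = u_e`, `v = b - u_e` and `k = h/Fr²`. -/
def waveSpeedCubic (u v k x : ℝ) : ℝ := (v - x) * ((u - x) ^ 2 - k)

namespace waveSpeedCubic

variable (u v k : ℝ)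

theorem continuous : Continuous (waveSpeedCubic u v k) := by
  unfold waveSpeedCubic
  fun_prop

theorem tendsto_atBot : Tendsto (waveSpeedCubic u v k) atBot atTop := by
  have hlin (c : ℝ) : Tendsto (fun x => c - x) atBot atTop :=
    tendsto_atTop_add_const_left _ c tendsto_neg_atBot_atTop
  have hsq : Tendsto (fun x => (u - x) ^ 2 - k) atBot atTop :=
    tendsto_atTop_add_const_right _ (-k) ((tendsto_pow_atTop two_ne_zero).comp (hlin u))
  exact (hlin v).atTop_mul_atTop₀ hsq

theorem neg_neg_apply_neg (x : ℝ) : waveSpeedCubic (-u) (-v) k (-x) = -waveSpeedCubic u v k x := by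
  unfold waveSpeedCubic
  ring

theorem tendsto_atTop : Tendsto (waveSpeedCubic u v k) atTop atBot := by
  have hreflect := tendsto_neg_atTop_atBot.comp
    ((tendsto_atBot (-u) (-v) k).comp tendsto_neg_atTop_atBot)
  refine hreflect.congr fun x => ?_
  simp only [Function.comp_apply, neg_neg_apply_neg, neg_neg]

/-- The smaller critical point `λ₋` of `waveSpeedCubic u v k`, provided that
`0 ≤ (u - v) ^ 2 + 3 * k`. -/
noncomputable def lowerCritical : ℝ := (2 * u + v - √((u - v) ^ 2 + 3 * k)) / 3

/-- The larger critical point `λ₊` of `waveSpeedCubic u v k`, provided that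
`0 ≤ (u - v) ^ 2 + 3 * k`. -/
noncomputable def upperCritical : ℝ := (2 * u + v + √((u - v) ^ 2 + 3 * k)) / 3

variable {u v k}

theorem lowerCritical_lt_upperCritical (hdisc : 0 < (u - v) ^ 2 + 3 * k) :
    lowerCritical u v k < upperCritical u v k := by
  have hsqrt : 0 < √((u - v) ^ 2 + 3 * k) := Real.sqrt_pos.2 hdisc
  unfold lowerCritical upperCritical
  linarith

theorem deriv_eq (x : ℝ) :
    deriv (waveSpeedCubic u v k) x = -((u - x) ^ 2 - k) - 2 * (v - x) * (u - x) := by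
  have hlin (c : ℝ) : HasDerivAt (fun y => c - y) (-1) x := (hasDerivAt_id x).const_sub c
  have hprod := (hlin v).mul (((hlin u).pow 2).sub_const k)
  refine (hprod.congr_deriv ?_).deriv
  simp only [Pi.pow_apply, Nat.cast_ofNat, Nat.add_one_sub_one, pow_one]
  ring

theorem deriv_eq_mul_critical (hdisc : 0 ≤ (u - v) ^ 2 + 3 * k) (x : ℝ) :
    deriv (waveSpeedCubic u v k) x =
      -3 * ((x - lowerCritical u v k) * (x - upperCritical u v k)) := by
  rw [deriv_eq, lowerCritical, upperCritical]
  linear_combination (-1 / 3) * Real.sq_sqrt hdisc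

theorem deriv_eq_zero_iff (hdisc : 0 ≤ (u - v) ^ 2 + 3 * k) (x : ℝ) :
    deriv (waveSpeedCubic u v k) x = 0 ↔ x = lowerCritical u v k ∨ x = upperCritical u v k := by
  simp [deriv_eq_mul_critical hdisc, sub_eq_zero]

theorem exists_three_solutions (hdisc : 0 < (u - v) ^ 2 + 3 * k) {d : ℝ}
    (hd : d ∈ Ioo (waveSpeedCubic u v k (lowerCritical u v k))
      (waveSpeedCubic u v k (upperCritical u v k))) :
    ∃ x y z : ℝ, x < y ∧ y < z ∧ ∀ t, waveSpeedCubic u v k t = d ↔ t = x ∨ t = y ∨ t = z :=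
  exists_three_preimages_of_deriv_eq_zero (lowerCritical_lt_upperCritical hdisc).le
    (continuous u v k) (tendsto_atBot u v k) (tendsto_atTop u v k)
    (fun x => (deriv_eq_zero_iff hdisc.le x).1) hd

end waveSpeedCubic

theorem eval_charpoly_convMatrix (ue h a b δb Fr x : ℝ) :
    (convMatrix ue h a b δb Fr).charpoly.eval x =
      δb * a / Fr ^ 2 - waveSpeedCubic ue (b - ue) (h / Fr ^ 2) x := by
  have hmatrix : Matrix.scalar (Fin 3) x - convMatrix ue h a b δb Fr =
      Matrix.of ![![x - ue, -h, δb], ![-(Fr ^ 2)⁻¹, x - ue, 0], ![0, -a, x - (b - ue)]] := by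
    ext i j
    fin_cases i <;> fin_cases j <;> simp [convMatrix]
  rw [Matrix.eval_charpoly, hmatrix, Matrix.det_fin_three, waveSpeedCubic]
  simp only [Matrix.of_apply, Matrix.cons_val]
  ring

theorem hasEigenvalue_convMatrix_iff (ue h a b δb Fr x : ℝ) :
    Module.End.HasEigenvalue (Matrix.toLin' (convMatrix ue h a b δb Fr)) x ↔
      waveSpeedCubic ue (b - ue) (h / Fr ^ 2) x = δb * a / Fr ^ 2 := by
  rw [Module.End.hasEigenvalue_iff_isRoot_charpoly, Matrix.charpoly_toLin', Polynomial.IsRoot,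
    eval_charpoly_convMatrix, sub_eq_zero, eq_comm]

/-- The cubic `P_SW(λ) = (b − u_e − λ)((u_e − λ)² − h/Fr²)` has a derivative
with exactly two distinct real roots `λ₋ < λ₊`, and for every
`P_SW(λ₋) < d < P_SW(λ₊)` the equation `P_SW(λ) = d` has exactly three
distinct real solutions.  Consequently, under the condition
`P_SW(λ₋) < δ̄a/Fr² < P_SW(λ₊)` the convective matrix of the extended shallow
water system has three distinct real eigenvalues: the system is strictly
hyperbolic. -/
theorem conditional_strict_hyperbolicity
    (ue b h Fr : ℝ) (hh : 0 < h) (hFr : 0 < Fr)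
    (P : ℝ → ℝ)
    (hP : P = fun lam => (b - ue - lam) * ((ue - lam) ^ 2 - h / Fr ^ 2)) :
    ∃ lm lp : ℝ, lm < lp ∧
      (∀ x : ℝ, deriv P x = 0 ↔ (x = lm ∨ x = lp)) ∧
      (∀ d : ℝ, P lm < d → d < P lp →
        ∃ l1 l2 l3 : ℝ, l1 < l2 ∧ l2 < l3 ∧
          ∀ lam : ℝ, P lam = d ↔ (lam = l1 ∨ lam = l2 ∨ lam = l3)) ∧
      (∀ a δb : ℝ, P lm < δb * a / Fr ^ 2 → δb * a / Fr ^ 2 < P lp →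
        ∃ l1 l2 l3 : ℝ, l1 < l2 ∧ l2 < l3 ∧
          ∀ lam : ℝ,
            Module.End.HasEigenvalue
                (Matrix.toLin' (convMatrix ue h a b δb Fr)) lam ↔
              (lam = l1 ∨ lam = l2 ∨ lam = l3)) := by
  have hdisc : 0 < (ue - (b - ue)) ^ 2 + 3 * (h / Fr ^ 2) := by positivity
  replace hP : P = waveSpeedCubic ue (b - ue) (h / Fr ^ 2) := hP
  subst hP
  refine ⟨_, _, waveSpeedCubic.lowerCritical_lt_upperCritical hdisc,
    waveSpeedCubic.deriv_eq_zero_iff hdisc.le,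
    fun d hlow hup => waveSpeedCubic.exists_three_solutions hdisc ⟨hlow, hup⟩,
    fun a δb hlow hup => ?_⟩
  simpa only [hasEigenvalue_convMatrix_iff] using
    waveSpeedCubic.exists_three_solutions hdisc ⟨hlow, hup⟩
end
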